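/- Convexity of classical minus quantum entropy on a single space (Holevo-type bound): Let P^1,…,P^M be positive semidefinite operators on a finite-dimensional complex Hilbert space H with ∑_α P^α = id_H, and define S^cl[ρ] = ∑_α φ( Tr[P^α ρ] ) with φ(x) = −x ln x (and φ(0)=0). Then the map ρ ↦ S^cl[ρ] − S[ρ] is convex on the set of density matrices on H: for density matrices A, B and t ∈ [0,1], S^cl[tA+(1−t)B] − S[tA+(1−t)B] ≤ t( S^cl[A] − S[A] ) + (1−t)( S^cl[B] − S[B] ). -/

import Mathlib

open Matrix Kronecker Real
open scoped ComplexOrder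

/-- Von Neumann entropy of a (Hermitian) matrix: the sum of `-λ ln λ` over its
eigenvalues, with the convention `0 ln 0 = 0`. -/
noncomputable def entropy {n : Type*} [Fintype n] [DecidableEq n]
    (A : Matrix n n ℂ) : ℝ :=
  if h : A.IsHermitian then ∑ i, Real.negMulLog (h.eigenvalues i) else 0

/-- Partial trace over the first factor of a twofold tensor product. -/
noncomputable def ptraceFst {m k : Type*} [Fintype m]
    (ρ : Matrix (m × k) (m × k) ℂ) : Matrix k k ℂ :=
  Matrix.of fun i j => ∑ a : m, ρ (a, i) (a, j)

/-- Partial trace over the second factor of a twofold tensor product. -/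
noncomputable def ptraceSnd {m k : Type*} [Fintype k]
    (ρ : Matrix (m × k) (m × k) ℂ) : Matrix m m ℂ :=
  Matrix.of fun i j => ∑ a : k, ρ (i, a) (j, a)

/-- Partial trace over the first factor of a threefold tensor product
(indexed as `(H₁ ⊗ H₂) ⊗ H₃`). -/
noncomputable def ptraceFst₃ {a b c : Type*} [Fintype a]
    (ρ : Matrix ((a × b) × c) ((a × b) × c) ℂ) : Matrix (b × c) (b × c) ℂ :=
  Matrix.of fun p q => ∑ i : a, ρ ((i, p.1), p.2) ((i, q.1), q.2)

/-!
With `C = tA + (1 - t)B`, convexity says that the average of the relative entropies of `A` and `B`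
with respect to `C` does not increase under the measurement `P`.

The quantum relative entropy of `A` and `C` is the Kullback–Leibler divergence of their
Nussbaum–Szkoła distributions `x`, `y`, so two classical divergences have to be compared. Up to a
term depending only on `∑ x`, the divergence is the limit for `T → ∞` of `∑ x log (1 + T x / y)`,
which vanishes at `T = 0` and has derivative `∑ x² / (y + T x)`. The latter is the maximum over all
matrices `Y` of `2 Re Tr (A Y) - Tr (C Y Yᴴ) - T Tr (A Yᴴ Y)`; evaluating at
`Y = ∑ y_α P^α`, with `y_α` the optimal weights for the outcome probabilities, Kadison's inequality
bounds the classical expression by the quantum one.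
-/

open scoped MatrixOrder Topology

section Classical

variable {ι κ : Type*} [Fintype ι] [Fintype κ]

/-- The Kullback–Leibler divergence of two nonnegative families of reals. Since `Real.log 0 = 0`,
it is the usual divergence only when `x` vanishes wherever `y` does. -/
noncomputable def klSum (x y : ι → ℝ) : ℝ :=
  ∑ i, x i * (log (x i) - log (y i))

lemma hasDerivAt_mul_log_one_add {a b T : ℝ} (ha : 0 ≤ a) (hb : 0 ≤ b) (hab : b = 0 → a = 0)
    (hT : 0 ≤ T) :
    HasDerivAt (fun S ↦ a * log (1 + S * (a / b))) (a ^ 2 / (b + T * a)) T := by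
  rcases hb.eq_or_lt with rfl | hb
  · simpa [hab rfl] using hasDerivAt_const T (0 : ℝ)
  · have hlin : HasDerivAt (fun S : ℝ ↦ 1 + S * (a / b)) (a / b) T := by
      simpa using ((hasDerivAt_id T).mul_const (a / b)).const_add 1
    refine ((hlin.log (by positivity)).const_mul a).congr_deriv ?_
    field_simp

lemma tendsto_mul_log_one_add_sub {a b : ℝ} (ha : 0 ≤ a) (hb : 0 ≤ b) (hab : b = 0 → a = 0) :
    Filter.Tendsto (fun T ↦ a * log (1 + T * (a / b)) - a * log T) Filter.atTop
      (𝓝 (a * (log a - log b))) := by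
  rcases ha.eq_or_lt with rfl | ha
  · simp
  have hb : 0 < b := hb.lt_of_ne fun h ↦ ha.ne' (hab h.symm)
  have hlim : Filter.Tendsto (fun T : ℝ ↦ a * log (T⁻¹ + a / b)) Filter.atTop
      (𝓝 (a * log (0 + a / b))) :=
    ((tendsto_inv_atTop_zero.add_const _).log (by positivity)).const_mul a
  rw [zero_add, log_div ha.ne' hb.ne'] at hlim
  refine hlim.congr' ?_
  filter_upwards [Filter.eventually_gt_atTop 0] with T hT
  rw [← mul_sub, ← log_div (by positivity) hT.ne', add_div, one_div, mul_div_cancel_left₀ _ hT.ne']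

lemma tendsto_sum_mul_log_one_add_sub {x y : ι → ℝ} (hx : ∀ i, 0 ≤ x i) (hy : ∀ i, 0 ≤ y i)
    (hxy : ∀ i, y i = 0 → x i = 0) :
    Filter.Tendsto (fun T ↦ ∑ i, x i * log (1 + T * (x i / y i)) - (∑ i, x i) * log T)
      Filter.atTop (𝓝 (klSum x y)) := by
  simp only [Finset.sum_mul, ← Finset.sum_sub_distrib]
  exact tendsto_finsetSum _ fun i _ ↦ tendsto_mul_log_one_add_sub (hx i) (hy i) (hxy i)

lemma sum_mul_log_one_add_le {x y : ι → ℝ} {x' y' : κ → ℝ}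
    (hx : ∀ i, 0 ≤ x i) (hy : ∀ i, 0 ≤ y i) (hxy : ∀ i, y i = 0 → x i = 0)
    (hx' : ∀ k, 0 ≤ x' k) (hy' : ∀ k, 0 ≤ y' k) (hxy' : ∀ k, y' k = 0 → x' k = 0)
    (hsq : ∀ T, 0 ≤ T → ∑ i, x i ^ 2 / (y i + T * x i) ≤ ∑ k, x' k ^ 2 / (y' k + T * x' k))
    {T : ℝ} (hT : 0 ≤ T) :
    ∑ i, x i * log (1 + T * (x i / y i)) ≤ ∑ k, x' k * log (1 + T * (x' k / y' k)) := by
  let F (S : ℝ) : ℝ :=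
    ∑ k, x' k * log (1 + S * (x' k / y' k)) - ∑ i, x i * log (1 + S * (x i / y i))
  have hderiv (S : ℝ) (hS : 0 ≤ S) : HasDerivAt F
      (∑ k, x' k ^ 2 / (y' k + S * x' k) - ∑ i, x i ^ 2 / (y i + S * x i)) S :=
    (HasDerivAt.fun_sum fun k _ ↦ hasDerivAt_mul_log_one_add (hx' k) (hy' k) (hxy' k) hS).sub
      (HasDerivAt.fun_sum fun i _ ↦ hasDerivAt_mul_log_one_add (hx i) (hy i) (hxy i) hS)
  have hmono : MonotoneOn F (Set.Ici 0) :=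
    monotoneOn_of_hasDerivWithinAt_nonneg (convex_Ici 0)
      (fun S hS ↦ (hderiv S hS).continuousAt.continuousWithinAt)
      (fun S hS ↦ (hderiv S (interior_subset hS)).hasDerivWithinAt)
      (fun S hS ↦ sub_nonneg.2 (hsq S (interior_subset hS)))
  have hF : F 0 ≤ F T := hmono Set.self_mem_Ici hT hT
  simpa [F] using hF

lemma klSum_le_klSum_of_sum_sq_div_le {x y : ι → ℝ} {x' y' : κ → ℝ}
    (hx : ∀ i, 0 ≤ x i) (hy : ∀ i, 0 ≤ y i) (hxy : ∀ i, y i = 0 → x i = 0)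
    (hx' : ∀ k, 0 ≤ x' k) (hy' : ∀ k, 0 ≤ y' k) (hxy' : ∀ k, y' k = 0 → x' k = 0)
    (hsum : ∑ i, x i = ∑ k, x' k)
    (hsq : ∀ T, 0 ≤ T → ∑ i, x i ^ 2 / (y i + T * x i) ≤ ∑ k, x' k ^ 2 / (y' k + T * x' k)) :
    klSum x y ≤ klSum x' y' := by
  refine le_of_tendsto_of_tendsto (tendsto_sum_mul_log_one_add_sub hx hy hxy)
    (tendsto_sum_mul_log_one_add_sub hx' hy' hxy') ?_
  filter_upwards [Filter.eventually_ge_atTop 0] with T hT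
  rw [hsum]
  exact sub_le_sub_right (sum_mul_log_one_add_le hx hy hxy hx' hy' hxy' hsq hT) _

lemma mul_klSum_add_mul_klSum (a b : ℝ) (x y : ι → ℝ) :
    a * klSum x (a • x + b • y) + b * klSum y (a • x + b • y) =
      ∑ i, negMulLog ((a • x + b • y) i)
        - (a * ∑ i, negMulLog (x i) + b * ∑ i, negMulLog (y i)) := by
  simp only [klSum, negMulLog, Finset.mul_sum, ← Finset.sum_add_distrib, ← Finset.sum_sub_distrib,
    Pi.add_apply, Pi.smul_apply, smul_eq_mul]
  exact Finset.sum_congr rfl fun i _ ↦ by ring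

end Classical

section Trace

variable {n : Type*} [Fintype n] {A B C : Matrix n n ℂ}

open scoped Matrix.Norms.L2Operator in
lemma re_trace_mul_nonneg (hA : A.PosSemidef) (hB : B.PosSemidef) : 0 ≤ (A * B).trace.re := by
  classical
  obtain ⟨R, rfl⟩ := CStarAlgebra.nonneg_iff_eq_star_mul_self.mp hA.nonneg
  rw [star_eq_conjTranspose, Matrix.mul_assoc, trace_mul_comm]
  exact (Complex.le_def.1 (hB.mul_mul_conjTranspose_same R).trace_nonneg).1

lemma re_trace_mul_le_of_le (hA : A.PosSemidef) (hBC : B ≤ C) :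
    (A * B).trace.re ≤ (A * C).trace.re := by
  simpa [Matrix.mul_sub] using re_trace_mul_nonneg hA hBC

lemma re_trace_mul_eq_zero_of_smul_le (hA : A.PosSemidef) (hB : B.PosSemidef) {b : ℝ}
    (hb : 0 < b) (hBC : b • B ≤ C) (hAC : (A * C).trace.re = 0) : (A * B).trace.re = 0 := by
  have hle : b * (A * B).trace.re ≤ (A * C).trace.re := by
    simpa only [Matrix.mul_smul, trace_smul, Complex.smul_re, smul_eq_mul] using
      re_trace_mul_le_of_le hA hBC
  exact (nonpos_of_mul_nonpos_right (hle.trans_eq hAC) hb).antisymm (re_trace_mul_nonneg hA hB)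

end Trace

section Eigenbases

variable {n : Type*} [Fintype n] [DecidableEq n] {A C : Matrix n n ℂ}

lemma cfc_eq_mul_diagonal_mul (hA : A.IsHermitian) (f : ℝ → ℝ) :
    cfc f A = hA.eigenvectorUnitary * diagonal (fun i ↦ (f (hA.eigenvalues i) : ℂ)) *
      (hA.eigenvectorUnitary : Matrix n n ℂ)ᴴ := by
  rw [hA.cfc_eq]
  rfl

lemma cfc_mul_cfc (A : Matrix n n ℂ) (f g : ℝ → ℝ) :
    cfc f A * cfc g A = cfc (fun x ↦ f x * g x) A :=
  (cfc_mul f g A (A.finite_real_spectrum.continuousOn f)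
    (A.finite_real_spectrum.continuousOn g)).symm

lemma trace_cfc (hA : A.IsHermitian) (f : ℝ → ℝ) :
    (cfc f A).trace = ∑ i, (f (hA.eigenvalues i) : ℂ) := by
  rw [cfc_eq_mul_diagonal_mul hA, trace_mul_comm, ← Matrix.mul_assoc, ← star_eq_conjTranspose,
    Unitary.coe_star_mul_self, Matrix.one_mul, trace_diagonal]

lemma entropy_eq_neg_re_trace_mul_log (hA : A.IsHermitian) :
    entropy A = -(A * cfc log A).trace.re := by
  nth_rw 2 [← cfc_id ℝ A hA.isSelfAdjoint]
  rw [cfc_mul_cfc, trace_cfc hA]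
  simp [entropy, hA, negMulLog]

/-- The matrix of `X` as a map from the eigenbasis of `A` (columns) to the eigenbasis of `C`
(rows). -/
noncomputable def eigenMatrix (hA : A.IsHermitian) (hC : C.IsHermitian) (X : Matrix n n ℂ) :
    Matrix n n ℂ :=
  (hC.eigenvectorUnitary : Matrix n n ℂ)ᴴ * X * hA.eigenvectorUnitary

lemma trace_cfc_mul_conjTranspose_mul_cfc_mul (hA : A.IsHermitian) (hC : C.IsHermitian)
    (f g : ℝ → ℝ) (X Y : Matrix n n ℂ) :
    (cfc f A * Yᴴ * cfc g C * X).trace =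
      ∑ k : n × n, (f (hA.eigenvalues k.1) : ℂ) * (g (hC.eigenvalues k.2) : ℂ) *
        (star (eigenMatrix hA hC Y k.2 k.1) * eigenMatrix hA hC X k.2 k.1) := by
  have hcycle : (cfc f A * Yᴴ * cfc g C * X).trace =
      (diagonal (fun i ↦ (f (hA.eigenvalues i) : ℂ)) * ((eigenMatrix hA hC Y)ᴴ *
        (diagonal (fun i ↦ (g (hC.eigenvalues i) : ℂ)) * eigenMatrix hA hC X))).trace := by
    simp only [cfc_eq_mul_diagonal_mul hA, cfc_eq_mul_diagonal_mul hC, eigenMatrix,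
      conjTranspose_mul, conjTranspose_conjTranspose, Matrix.mul_assoc]
    rw [trace_mul_comm]
    simp only [Matrix.mul_assoc]
  rw [hcycle, Fintype.sum_prod_type]
  simp only [trace, diag_apply, diagonal_mul, mul_apply (M := (eigenMatrix hA hC Y)ᴴ),
    conjTranspose_apply, Finset.mul_sum]
  exact Finset.sum_congr rfl fun i _ ↦ Finset.sum_congr rfl fun j _ ↦ by ring

/-- The squared overlap `|⟨vⱼ, uᵢ⟩|²` of the `i`-th eigenvector of `A` with the `j`-th eigenvector
of `C`, where `k = (i, j)`. -/
noncomputable def eigenOverlap (hA : A.IsHermitian) (hC : C.IsHermitian) (k : n × n) : ℝ :=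
  Complex.normSq (eigenMatrix hA hC 1 k.2 k.1)

/-- The first of the two Nussbaum–Szkoła distributions of `A` and `C`, whose classical relative
entropy is the quantum relative entropy of `A` with respect to `C`. -/
noncomputable def nussbaumSzkolaFst (hA : A.IsHermitian) (hC : C.IsHermitian) (k : n × n) : ℝ :=
  hA.eigenvalues k.1 * eigenOverlap hA hC k

/-- The second of the two Nussbaum–Szkoła distributions of `A` and `C`. -/
noncomputable def nussbaumSzkolaSnd (hA : A.IsHermitian) (hC : C.IsHermitian) (k : n × n) : ℝ :=
  hC.eigenvalues k.2 * eigenOverlap hA hC k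

lemma eigenOverlap_nonneg (hA : A.IsHermitian) (hC : C.IsHermitian) (k : n × n) :
    0 ≤ eigenOverlap hA hC k :=
  Complex.normSq_nonneg _

lemma nussbaumSzkolaFst_nonneg (hA : A.PosSemidef) (hC : C.IsHermitian) (k : n × n) :
    0 ≤ nussbaumSzkolaFst hA.1 hC k :=
  mul_nonneg (hA.eigenvalues_nonneg _) (eigenOverlap_nonneg _ _ _)

lemma nussbaumSzkolaSnd_nonneg (hA : A.IsHermitian) (hC : C.PosSemidef) (k : n × n) :
    0 ≤ nussbaumSzkolaSnd hA hC.1 k :=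
  mul_nonneg (hC.eigenvalues_nonneg _) (eigenOverlap_nonneg _ _ _)

lemma re_trace_cfc_mul_cfc (hA : A.IsHermitian) (hC : C.IsHermitian) (f g : ℝ → ℝ) :
    (cfc f A * cfc g C).trace.re =
      ∑ k : n × n, f (hA.eigenvalues k.1) * g (hC.eigenvalues k.2) * eigenOverlap hA hC k := by
  have h := trace_cfc_mul_conjTranspose_mul_cfc_mul hA hC f g 1 1
  simp only [conjTranspose_one, Matrix.mul_one] at h
  rw [h, Complex.re_sum]
  refine Finset.sum_congr rfl fun k _ ↦ ?_
  rw [← Complex.ofReal_mul, Complex.re_ofReal_mul, Complex.star_def,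
    ← Complex.normSq_eq_conj_mul_self, Complex.ofReal_re, eigenOverlap]

lemma sum_nussbaumSzkolaFst (hA : A.IsHermitian) (hC : C.IsHermitian) :
    ∑ k, nussbaumSzkolaFst hA hC k = A.trace.re := by
  have h := re_trace_cfc_mul_cfc hA hC id fun _ ↦ 1
  rw [cfc_id ℝ A hA.isSelfAdjoint, cfc_const_one ℝ C hC.isSelfAdjoint, Matrix.mul_one] at h
  simp [h, nussbaumSzkolaFst]

-- Test `a • A ≤ C` against the projection onto the kernel of `C`.
lemma nussbaumSzkolaFst_eq_zero_of_snd_eq_zero (hA : A.PosSemidef) (hC : C.IsHermitian) {a : ℝ}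
    (ha : 0 < a) (hAC : a • A ≤ C) {k : n × n} (hk : nussbaumSzkolaSnd hA.1 hC k = 0) :
    nussbaumSzkolaFst hA.1 hC k = 0 := by
  rcases mul_eq_zero.1 hk with hk | hk
  swap
  · rw [nussbaumSzkolaFst, hk, mul_zero]
  let g : ℝ → ℝ := Set.indicator {0} 1
  have hg (x : ℝ) : 0 ≤ g x := Set.indicator_nonneg (fun _ _ ↦ zero_le_one) x
  have hQ : (cfc g C).PosSemidef := (cfc_nonneg fun x _ ↦ hg x).posSemidef
  have hQC : cfc g C * C = 0 := by
    nth_rw 2 [← cfc_id ℝ C hC.isSelfAdjoint]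
    rw [cfc_mul_cfc, ← cfc_const_zero ℝ C]
    congr 1
    ext x
    by_cases hx : x = 0 <;> simp [g, hx]
  have hQA : (A * cfc g C).trace.re = 0 := by
    rw [trace_mul_comm]
    exact re_trace_mul_eq_zero_of_smul_le hQ hA ha hAC (by rw [hQC, trace_zero, Complex.zero_re])
  rw [← cfc_id ℝ A hA.isHermitian.isSelfAdjoint, re_trace_cfc_mul_cfc hA.1 hC] at hQA
  have hterm (l : n × n) :
      0 ≤ id (hA.1.eigenvalues l.1) * g (hC.eigenvalues l.2) * eigenOverlap hA.1 hC l :=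
    mul_nonneg (mul_nonneg (hA.eigenvalues_nonneg _) (hg _)) (eigenOverlap_nonneg _ _ _)
  have hzero := (Finset.sum_eq_zero_iff_of_nonneg fun l _ ↦ hterm l).1 hQA k (Finset.mem_univ k)
  simpa [g, hk, nussbaumSzkolaFst] using hzero

end Eigenbases

section RelativeEntropy

variable {n : Type*} [Fintype n] [DecidableEq n] {A B C : Matrix n n ℂ}

/-- Umegaki's relative entropy `Tr A (ln A - ln C)`. Since `Real.log 0 = 0`, it is the usual
relative entropy only when the kernel of `C` is contained in that of `A`. -/
noncomputable def quantumRelEntropy (A C : Matrix n n ℂ) : ℝ :=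
  (A * (cfc log A - cfc log C)).trace.re

lemma quantumRelEntropy_eq_klSum (hA : A.IsHermitian) (hC : C.IsHermitian)
    (hAC : ∀ k, nussbaumSzkolaSnd hA hC k = 0 → nussbaumSzkolaFst hA hC k = 0) :
    quantumRelEntropy A C = klSum (nussbaumSzkolaFst hA hC) (nussbaumSzkolaSnd hA hC) := by
  have hAA : (A * cfc log A).trace.re =
      ∑ k, nussbaumSzkolaFst hA hC k * log (hA.eigenvalues k.1) := by
    have h := re_trace_cfc_mul_cfc hA hC (fun x ↦ id x * log x) fun _ ↦ 1
    rw [cfc_const_one ℝ C hC.isSelfAdjoint, Matrix.mul_one, ← cfc_mul_cfc,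
      cfc_id ℝ A hA.isSelfAdjoint] at h
    rw [h]
    exact Finset.sum_congr rfl fun k _ ↦ by simp only [nussbaumSzkolaFst, id]; ring
  have hAC' : (A * cfc log C).trace.re =
      ∑ k, nussbaumSzkolaFst hA hC k * log (hC.eigenvalues k.2) := by
    have h := re_trace_cfc_mul_cfc hA hC id log
    rw [cfc_id ℝ A hA.isSelfAdjoint] at h
    rw [h]
    exact Finset.sum_congr rfl fun k _ ↦ by simp only [nussbaumSzkolaFst, id]; ring
  rw [quantumRelEntropy, Matrix.mul_sub, trace_sub, Complex.sub_re, hAA, hAC',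
    ← Finset.sum_sub_distrib, klSum]
  refine Finset.sum_congr rfl fun k _ ↦ ?_
  by_cases hk : nussbaumSzkolaFst hA hC k = 0
  · simp [hk]
  obtain ⟨hr, ho⟩ := mul_ne_zero_iff.1 hk
  obtain ⟨hs, -⟩ := mul_ne_zero_iff.1 (mt (hAC k) hk)
  rw [← mul_sub, nussbaumSzkolaFst, nussbaumSzkolaSnd, log_mul hr ho, log_mul hs ho,
    add_sub_add_right_eq_sub]

lemma mul_quantumRelEntropy_add_mul_quantumRelEntropy (hA : A.IsHermitian) (hB : B.IsHermitian)
    (a b : ℝ) :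
    a * quantumRelEntropy A (a • A + b • B) + b * quantumRelEntropy B (a • A + b • B) =
      entropy (a • A + b • B) - (a * entropy A + b * entropy B) := by
  have hC : (a • A + b • B).IsHermitian := (hA.smul (.all a)).add (hB.smul (.all b))
  rw [entropy_eq_neg_re_trace_mul_log hA, entropy_eq_neg_re_trace_mul_log hB,
    entropy_eq_neg_re_trace_mul_log hC]
  unfold quantumRelEntropy
  generalize cfc log (a • A + b • B) = L
  simp only [Matrix.mul_sub, Matrix.add_mul, Matrix.smul_mul, trace_sub,
    trace_add, trace_smul, Complex.sub_re, Complex.add_re, Complex.smul_re, smul_eq_mul]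
  ring

lemma two_mul_re_star_mul_le (w z : ℂ) {d : ℝ} (hd : 0 < d) :
    2 * (star w * z).re ≤ Complex.normSq w / d + d * Complex.normSq z := by
  have hexpand : Complex.normSq w / d + d * Complex.normSq z - 2 * (star w * z).re =
      Complex.normSq (w - d * z) / d := by
    field_simp
    simp only [Complex.normSq_apply, Complex.star_def, Complex.mul_re, Complex.conj_re,
      Complex.conj_im, Complex.sub_re, Complex.ofReal_re, Complex.ofReal_im, Complex.sub_im,
      Complex.mul_im]
    ring
  linarith [div_nonneg (Complex.normSq_nonneg (w - d * z)) hd.le]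

lemma two_mul_re_sub_le_sq_div (w z : ℂ) {r s T : ℝ} (hr : 0 ≤ r) (hs : 0 ≤ s) (hT : 0 ≤ T)
    (hrs : s * Complex.normSq w = 0 → r * Complex.normSq w = 0) :
    2 * (r * (star w * z).re) - s * Complex.normSq z - T * (r * Complex.normSq z) ≤
      (r * Complex.normSq w) ^ 2 / (s * Complex.normSq w + T * (r * Complex.normSq w)) := by
  have hz := Complex.normSq_nonneg z
  by_cases hrw : r * Complex.normSq w = 0
  · have hcross : r * (star w * z).re = 0 := by
      rcases mul_eq_zero.1 hrw with h | h
      · rw [h, zero_mul]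
      · simp [Complex.normSq_eq_zero.1 h]
    rw [hrw, hcross, zero_pow two_ne_zero, zero_div]
    nlinarith [mul_nonneg hs hz, mul_nonneg hT (mul_nonneg hr hz)]
  have hs : 0 < s := hs.lt_of_ne' (left_ne_zero_of_mul (mt hrs hrw))
  have hw : Complex.normSq w ≠ 0 := right_ne_zero_of_mul hrw
  have hd : 0 < s + T * r := by positivity
  have hyoung := two_mul_re_star_mul_le (r * w) z hd
  have hrhs : (r * Complex.normSq w) ^ 2 / (s * Complex.normSq w + T * (r * Complex.normSq w)) =
      Complex.normSq (r * w) / (s + T * r) := by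
    rw [Complex.normSq_mul, Complex.normSq_ofReal,
      show s * Complex.normSq w + T * (r * Complex.normSq w) =
        (s + T * r) * Complex.normSq w by ring]
    field_simp
  have hlhs : (star (r * w) * z).re = r * (star w * z).re := by
    simp [mul_assoc]
  rw [hlhs] at hyoung
  linarith

lemma re_trace_mul_sub_le_sum_sq_div (hA : A.PosSemidef) (hC : C.PosSemidef)
    (hAC : ∀ k, nussbaumSzkolaSnd hA.1 hC.1 k = 0 → nussbaumSzkolaFst hA.1 hC.1 k = 0)
    {T : ℝ} (hT : 0 ≤ T) (Y : Matrix n n ℂ) :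
    2 * (A * Y).trace.re - (C * (Y * Yᴴ)).trace.re - T * (A * (Yᴴ * Y)).trace.re ≤
      ∑ k, nussbaumSzkolaFst hA.1 hC.1 k ^ 2 /
        (nussbaumSzkolaSnd hA.1 hC.1 k + T * nussbaumSzkolaFst hA.1 hC.1 k) := by
  have expand := trace_cfc_mul_conjTranspose_mul_cfc_mul hA.1 hC.1
  have hAsa := hA.isHermitian.isSelfAdjoint
  have hCsa := hC.isHermitian.isSelfAdjoint
  have hcross := expand id (fun _ ↦ 1) Y 1
  rw [cfc_id ℝ A hAsa, cfc_const_one ℝ C hCsa, conjTranspose_one, Matrix.mul_one,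
    Matrix.mul_one] at hcross
  have hsndSq := expand (fun _ ↦ 1) id Y Y
  rw [cfc_id ℝ C hCsa, cfc_const_one ℝ A hAsa, Matrix.one_mul, Matrix.mul_assoc, trace_mul_comm,
    Matrix.mul_assoc] at hsndSq
  have hfstSq := expand id (fun _ ↦ 1) Y Y
  rw [cfc_id ℝ A hAsa, cfc_const_one ℝ C hCsa, Matrix.mul_one, Matrix.mul_assoc] at hfstSq
  rw [hcross, hsndSq, hfstSq]
  simp only [Complex.re_sum, Finset.mul_sum, ← Finset.sum_sub_distrib, id, Complex.ofReal_one,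
    mul_one, one_mul, Complex.re_ofReal_mul, Complex.star_def, ← Complex.normSq_eq_conj_mul_self,
    Complex.ofReal_re]
  exact Finset.sum_le_sum fun k _ ↦ two_mul_re_sub_le_sq_div _ _ (hA.eigenvalues_nonneg _)
    (hC.eigenvalues_nonneg _) hT (hAC k)

end RelativeEntropy

section BornRule

variable {ι n : Type*} [Fintype n] {P : ι → Matrix n n ℂ} {A C : Matrix n n ℂ}

/-- The Born rule: the probabilities of the outcomes of the measurement `P` in the state `A`. -/
noncomputable def bornProb (P : ι → Matrix n n ℂ) (A : Matrix n n ℂ) (α : ι) : ℝ :=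
  (P α * A).trace.re

lemma bornProb_smul_add_smul (P : ι → Matrix n n ℂ) (A B : Matrix n n ℂ) (a b : ℝ) :
    bornProb P (a • A + b • B) = a • bornProb P A + b • bornProb P B := by
  ext α
  simp [bornProb, Matrix.mul_add]

lemma bornProb_nonneg (hP : ∀ α, (P α).PosSemidef) (hA : A.PosSemidef) (α : ι) :
    0 ≤ bornProb P A α :=
  re_trace_mul_nonneg (hP α) hA

lemma sum_bornProb [Fintype ι] [DecidableEq n] (hPsum : ∑ α, P α = 1) (A : Matrix n n ℂ) :
    ∑ α, bornProb P A α = A.trace.re := by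
  simp only [bornProb, ← Complex.re_sum, ← trace_sum, ← Finset.sum_mul, hPsum, Matrix.one_mul]

lemma re_trace_mul_sum_smul [Fintype ι] (P : ι → Matrix n n ℂ) (A : Matrix n n ℂ) (y : ι → ℝ) :
    (A * ∑ α, y α • P α).trace.re = ∑ α, y α * bornProb P A α := by
  simp [bornProb, Matrix.mul_sum, trace_sum, trace_mul_comm A]

end BornRule

section Measurement

variable {ι n : Type*} [Fintype ι] [Fintype n] [DecidableEq n] {P : ι → Matrix n n ℂ}
  {A C : Matrix n n ℂ}

/-- **Kadison's inequality** for a measurement. -/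
lemma sq_sum_smul_le_sum_sq_smul (hP : ∀ α, (P α).PosSemidef) (hPsum : ∑ α, P α = 1)
    (y : ι → ℝ) : (∑ α, y α • P α) * (∑ α, y α • P α) ≤ ∑ α, y α ^ 2 • P α := by
  set Y := ∑ α, y α • P α with hY
  have hYh : Yᴴ = Y := isSelfAdjoint_sum _ fun α _ ↦ (hP α).1.smul (.all (y α))
  have hvar : ∑ α, y α ^ 2 • P α - Y * Y =
      ∑ α, (y α • (1 : Matrix n n ℂ) - Y)ᴴ * P α * (y α • (1 : Matrix n n ℂ) - Y) := by
    have hterm (α : ι) : (y α • (1 : Matrix n n ℂ) - Y)ᴴ * P α * (y α • (1 : Matrix n n ℂ) - Y) =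
        y α ^ 2 • P α - (y α • P α) * Y - Y * (y α • P α) + Y * P α * Y := by
      simp only [conjTranspose_sub, conjTranspose_smul, conjTranspose_one, star_trivial, hYh,
        Matrix.sub_mul, Matrix.mul_sub, pow_two, ← smul_smul, Matrix.smul_mul, Matrix.mul_smul,
        Matrix.one_mul, Matrix.mul_one, smul_sub]
      abel
    simp only [hterm, Finset.sum_add_distrib, Finset.sum_sub_distrib, ← Finset.sum_mul,
      ← Finset.mul_sum, ← hY, hPsum, Matrix.mul_one]
    abel
  rw [Matrix.le_iff, hvar]
  exact posSemidef_sum _ fun α _ ↦ (hP α).conjTranspose_mul_mul_same _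

lemma re_trace_mul_sq_sum_smul_le (hP : ∀ α, (P α).PosSemidef) (hPsum : ∑ α, P α = 1)
    (hA : A.PosSemidef) (y : ι → ℝ) :
    (A * ((∑ α, y α • P α) * (∑ α, y α • P α))).trace.re ≤ ∑ α, y α ^ 2 * bornProb P A α :=
  (re_trace_mul_le_of_le hA (sq_sum_smul_le_sum_sq_smul hP hPsum y)).trans_eq
    (re_trace_mul_sum_smul P A _)

lemma sum_sq_div_eq (p q : ι → ℝ) (T : ℝ) :
    ∑ α, p α ^ 2 / (q α + T * p α) =
      2 * ∑ α, p α / (q α + T * p α) * p α - ∑ α, (p α / (q α + T * p α)) ^ 2 * q α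
        - T * ∑ α, (p α / (q α + T * p α)) ^ 2 * p α := by
  simp only [Finset.mul_sum, ← Finset.sum_sub_distrib]
  refine Finset.sum_congr rfl fun α _ ↦ ?_
  generalize hD : q α + T * p α = D
  rw [eq_sub_of_add_eq hD]
  rcases eq_or_ne D 0 with rfl | hD0
  · simp
  · field_simp
    ring

lemma sum_sq_div_bornProb_le (hP : ∀ α, (P α).PosSemidef) (hPsum : ∑ α, P α = 1)
    (hA : A.PosSemidef) (hC : C.PosSemidef)
    (hAC : ∀ k, nussbaumSzkolaSnd hA.1 hC.1 k = 0 → nussbaumSzkolaFst hA.1 hC.1 k = 0)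
    {T : ℝ} (hT : 0 ≤ T) :
    ∑ α, bornProb P A α ^ 2 / (bornProb P C α + T * bornProb P A α) ≤
      ∑ k, nussbaumSzkolaFst hA.1 hC.1 k ^ 2 /
        (nussbaumSzkolaSnd hA.1 hC.1 k + T * nussbaumSzkolaFst hA.1 hC.1 k) := by
  let y (α : ι) : ℝ := bornProb P A α / (bornProb P C α + T * bornProb P A α)
  let Y : Matrix n n ℂ := ∑ α, y α • P α
  have hYh : Yᴴ = Y := isSelfAdjoint_sum _ fun α _ ↦ (hP α).1.smul (.all (y α))
  calc
    _ = 2 * ∑ α, y α * bornProb P A α - ∑ α, y α ^ 2 * bornProb P C α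
          - T * ∑ α, y α ^ 2 * bornProb P A α := sum_sq_div_eq _ _ T
    _ ≤ 2 * (A * Y).trace.re - (C * (Y * Y)).trace.re - T * (A * (Y * Y)).trace.re := by
      rw [re_trace_mul_sum_smul]
      gcongr
      · exact re_trace_mul_sq_sum_smul_le hP hPsum hC y
      · exact re_trace_mul_sq_sum_smul_le hP hPsum hA y
    _ ≤ _ := by simpa only [hYh] using re_trace_mul_sub_le_sum_sq_div hA hC hAC hT Y

theorem klSum_bornProb_le_quantumRelEntropy (hP : ∀ α, (P α).PosSemidef)
    (hPsum : ∑ α, P α = 1) (hA : A.PosSemidef) (hC : C.PosSemidef) {a : ℝ} (ha : 0 < a)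
    (hAC : a • A ≤ C) : klSum (bornProb P A) (bornProb P C) ≤ quantumRelEntropy A C := by
  have hsupp (k : n × n) (hk : nussbaumSzkolaSnd hA.1 hC.1 k = 0) :
      nussbaumSzkolaFst hA.1 hC.1 k = 0 :=
    nussbaumSzkolaFst_eq_zero_of_snd_eq_zero hA hC.1 ha hAC hk
  rw [quantumRelEntropy_eq_klSum hA.1 hC.1 hsupp]
  exact klSum_le_klSum_of_sum_sq_div_le (bornProb_nonneg hP hA) (bornProb_nonneg hP hC)
    (fun α ↦ re_trace_mul_eq_zero_of_smul_le (hP α) hA ha hAC)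
    (nussbaumSzkolaFst_nonneg hA hC.1) (nussbaumSzkolaSnd_nonneg hA.1 hC) hsupp
    ((sum_bornProb hPsum A).trans (sum_nussbaumSzkolaFst hA.1 hC.1).symm)
    fun T hT ↦ sum_sq_div_bornProb_le hP hPsum hA hC hsupp hT

lemma mul_klSum_bornProb_le_mul_quantumRelEntropy (hP : ∀ α, (P α).PosSemidef)
    (hPsum : ∑ α, P α = 1) (hA : A.PosSemidef) (hC : C.PosSemidef) {a : ℝ} (ha : 0 ≤ a)
    (hAC : a • A ≤ C) :
    a * klSum (bornProb P A) (bornProb P C) ≤ a * quantumRelEntropy A C := by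
  rcases ha.eq_or_lt with rfl | ha
  · simp only [zero_mul, le_refl]
  · exact mul_le_mul_of_nonneg_left
      (klSum_bornProb_le_quantumRelEntropy hP hPsum hA hC ha hAC) ha.le

theorem classical_minus_quantum_entropy_convex_single_general (hP : ∀ α, (P α).PosSemidef)
    (hPsum : ∑ α, P α = 1) :
    ConvexOn ℝ {ρ : Matrix n n ℂ | ρ.PosSemidef}
      fun ρ ↦ ∑ α, negMulLog (P α * ρ).trace.re - entropy ρ := by
  have hconvex : Convex ℝ {ρ : Matrix n n ℂ | ρ.PosSemidef} := fun A hA B hB a b ha hb _ ↦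
    (hA.smul ha).add (hB.smul hb)
  refine ⟨hconvex, fun A hA B hB a b ha hb hab ↦ ?_⟩
  have hC : (a • A + b • B).PosSemidef := hconvex hA hB ha hb hab
  have hkl := mul_klSum_add_mul_klSum a b (bornProb P A) (bornProb P B)
  rw [← bornProb_smul_add_smul] at hkl
  have hrel := mul_quantumRelEntropy_add_mul_quantumRelEntropy hA.1 hB.1 a b
  have hdataA := mul_klSum_bornProb_le_mul_quantumRelEntropy hP hPsum hA hC ha
    (le_add_of_nonneg_right (hB.smul hb).nonneg)
  have hdataB := mul_klSum_bornProb_le_mul_quantumRelEntropy hP hPsum hB hC hb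
    (le_add_of_nonneg_left (hA.smul ha).nonneg)
  simp only [bornProb, smul_eq_mul] at hkl ⊢
  linarith

end Measurement

/-- **Convexity of classical minus quantum entropy on a single space**
(Holevo-type bound): the map `ρ ↦ S^cl[ρ] − S[ρ]` is convex on density
matrices. -/
theorem classical_minus_quantum_entropy_convex_single
    {n : Type*} [Fintype n] [DecidableEq n] {M : ℕ}
    (P : Fin M → Matrix n n ℂ) (hP : ∀ α, (P α).PosSemidef)
    (hPsum : ∑ α, P α = 1)
    (A B : Matrix n n ℂ)
    (hA : A.PosSemidef) (hAtr : A.trace = 1)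
    (hB : B.PosSemidef) (hBtr : B.trace = 1)
    (t : ℝ) (ht0 : 0 ≤ t) (ht1 : t ≤ 1) :
    (∑ α, Real.negMulLog (((P α * ((t : ℂ) • A + ((1 - t : ℝ) : ℂ) • B)).trace).re))
      - entropy ((t : ℂ) • A + ((1 - t : ℝ) : ℂ) • B)
    ≤ t * ((∑ α, Real.negMulLog (((P α * A).trace).re)) - entropy A)
      + (1 - t) * ((∑ α, Real.negMulLog (((P α * B).trace).re)) - entropy B) := by
  simpa only [Complex.coe_smul, smul_eq_mul] using
    (classical_minus_quantum_entropy_convex_single_general hP hPsum).2 hA hB ht0 (sub_nonneg.2 ht1)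
      (add_sub_cancel t 1)
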